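/- arXiv:1508.02996 — 12 statements merged into one kernel-verified Lean document; each statement's English description precedes it below -/
import Mathlib

section
/- Let X be a metric space and n ≥ 0 an integer. The following are equivalent: (1) for every R > 0 there exists a uniformly bounded cover 𝒱 of X with Lebesgue number at least R and multiplicity at most n+1; (2) for every R > 0 there exist families 𝒱₁, …, 𝒱_{n+1} of subsets of X such that 𝒱 = 𝒱₁ ∪ … ∪ 𝒱_{n+1} is a uniformly bounded cover of X and each 𝒱ᵢ is R-disjoint. -/
open Metric Set

/-- A set `U` is uniformly bounded by `D`: all pairwise distances are at most `D`. -/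
def UBdd {X : Type*} [MetricSpace X] (D : ℝ) (U : Set X) : Prop :=
  ∀ x ∈ U, ∀ y ∈ U, dist x y ≤ D

/-- A family of subsets covers `X`. -/
def IsCover {X : Type*} (𝒱 : Set (Set X)) : Prop := ∀ x : X, ∃ U ∈ 𝒱, x ∈ U

/-- The cover `𝒱` has Lebesgue number at least `R`: every open `R`-ball is
contained in some member of `𝒱`. -/
def LebAtLeast {X : Type*} [MetricSpace X] (R : ℝ) (𝒱 : Set (Set X)) : Prop :=
  ∀ x : X, ∃ U ∈ 𝒱, Metric.ball x R ⊆ U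

/-- The family `𝒱` has multiplicity at most `m`: every point belongs to at most
`m` members of `𝒱`. -/
def MultAtMost {X : Type*} (m : ℕ) (𝒱 : Set (Set X)) : Prop :=
  ∀ x : X, {U ∈ 𝒱 | x ∈ U}.Finite ∧ {U ∈ 𝒱 | x ∈ U}.ncard ≤ m

/-- The family `𝒱` is `R`-disjoint: points of distinct members are at distance at least `R`. -/
def RDisjoint {X : Type*} [MetricSpace X] (R : ℝ) (𝒱 : Set (Set X)) : Prop :=
  ∀ A ∈ 𝒱, ∀ B ∈ 𝒱, A ≠ B → ∀ a ∈ A, ∀ b ∈ B, R ≤ dist a b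

/-- A map is coarse (bornologous). -/
def Coarse {X Y : Type*} [MetricSpace X] [MetricSpace Y] (f : X → Y) : Prop :=
  ∀ R > (0:ℝ), ∃ S > (0:ℝ), ∀ x x' : X, dist x x' ≤ R → dist (f x) (f x') ≤ S

/-- A map is coarsely `n`-to-`1`: preimages of sets of diameter at most `R` can be covered
by at most `n` sets of diameter at most `S`, where `S` depends only on `R`. -/
def CoarselyNTo1 {X Y : Type*} [MetricSpace X] [MetricSpace Y] (n : ℕ) (f : X → Y) : Prop :=
  ∀ R > (0:ℝ), ∃ S > (0:ℝ), ∀ A : Set Y, UBdd R A →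
    ∃ B : Fin n → Set X, f ⁻¹' A ⊆ ⋃ i, B i ∧ ∀ i, UBdd S (B i)

/-- The star of a set `B` with respect to a family `𝒰`: the union of all members of `𝒰`
meeting `B`. -/
def StarOf {X : Type*} (B : Set X) (𝒰 : Set (Set X)) : Set X :=
  ⋃₀ {U ∈ 𝒰 | (U ∩ B).Nonempty}

theorem ostrand_mpr {X : Type*} [MetricSpace X] (n : ℕ)
    (h : ∀ R > (0:ℝ), ∃ V : Fin (n + 1) → Set (Set X), ∃ D > (0:ℝ),
      IsCover (⋃ i, V i) ∧ (∀ U ∈ ⋃ i, V i, UBdd D U) ∧ ∀ i, RDisjoint R (V i)) :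
    ∀ R > (0:ℝ), ∃ 𝒱 : Set (Set X), ∃ D > (0:ℝ), IsCover 𝒱 ∧ (∀ U ∈ 𝒱, UBdd D U) ∧
      LebAtLeast R 𝒱 ∧ MultAtMost (n + 1) 𝒱 := by
  intro R hR
  obtain ⟨V, D, hD, hcov, hbd, hdis⟩ := h (2 * R) (by linarith)
  have hleb : LebAtLeast R {W | ∃ i, ∃ U ∈ V i, W = Metric.thickening R U} := by
    intro x
    obtain ⟨U, hU, hxU⟩ := hcov x
    obtain ⟨i, hi⟩ := mem_iUnion.1 hU
    exact ⟨_, ⟨i, U, hi, rfl⟩, Metric.ball_subset_thickening hxU R⟩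
  refine ⟨_, D + 2 * R, by linarith, ?_, ?_, hleb, ?_⟩
  · intro x
    obtain ⟨U, hU, hxU⟩ := hleb x
    exact ⟨U, hU, hxU (Metric.mem_ball_self hR)⟩
  · rintro _ ⟨i, U, hU, rfl⟩ x hx y hy
    obtain ⟨a, ha, hxa⟩ := Metric.mem_thickening_iff.1 hx
    obtain ⟨b, hb, hyb⟩ := Metric.mem_thickening_iff.1 hy
    have h1 := hbd U (mem_iUnion.2 ⟨i, hU⟩) a ha b hb
    have h2 := dist_triangle4 x a b y
    rw [dist_comm b y] at h2
    linarith
  · intro x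
    classical
    let f : Fin (n + 1) → Set X := fun i =>
      if hi : ∃ U ∈ V i, x ∈ Metric.thickening R U then Metric.thickening R hi.choose else ∅
    have hsub : {W ∈ {W | ∃ i, ∃ U ∈ V i, W = Metric.thickening R U} | x ∈ W} ⊆
        ((Finset.univ.image f : Finset (Set X)) : Set (Set X)) := by
      rintro _ ⟨⟨i, U, hU, rfl⟩, hx⟩
      have hi : ∃ U ∈ V i, x ∈ Metric.thickening R U := ⟨U, hU, hx⟩
      have hfi : f i = Metric.thickening R hi.choose := dif_pos hi
      have hc := hi.choose_spec
      have : hi.choose = U := by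
        by_contra hne
        obtain ⟨a, ha, hxa⟩ := Metric.mem_thickening_iff.1 hc.2
        obtain ⟨b, hb, hxb⟩ := Metric.mem_thickening_iff.1 hx
        have h1 := hdis i _ hc.1 _ hU hne a ha b hb
        have h2 := dist_triangle_left a b x
        linarith
      rw [Finset.coe_image]
      exact ⟨i, by simp, by rw [hfi, this]⟩
    refine ⟨(Finset.finite_toSet _).subset hsub, ?_⟩
    refine (Set.ncard_le_ncard hsub (Finset.finite_toSet _)).trans ?_
    rw [Set.ncard_coe_finset]
    exact Finset.card_image_le.trans (by simp)

/-- The gap set of a subfamily `S` of `𝒱` at scale `R`. -/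
def gapSet {X : Type*} [MetricSpace X] (𝒱 : Set (Set X)) (R : ℝ) (S : Set (Set X)) : Set X :=
  {x | ∃ k : ℕ, 1 ≤ k ∧ (∀ U ∈ S, Metric.ball x ((k + 1) * R) ⊆ U) ∧
    ∀ U ∈ 𝒱, Metric.ball x (k * R) ⊆ U → U ∈ S}

theorem gapSet_key {X : Type*} [MetricSpace X] {𝒱 : Set (Set X)} {R : ℝ} (hR : 0 < R)
    {U : Set X} (hU : U ∈ 𝒱) {x y : X} (hxy : dist x y < R) {k l : ℕ}
    (h1 : Metric.ball x ((k + 1) * R) ⊆ U) (h2 : ¬ Metric.ball y (l * R) ⊆ U) : k < l := by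
  by_contra hkl
  have hkl' : (l : ℝ) ≤ k := by exact_mod_cast not_lt.1 hkl
  apply h2
  refine (Metric.ball_subset_ball' ?_).trans h1
  rw [dist_comm y x]
  nlinarith

theorem ostrand_mp {X : Type*} [MetricSpace X] (n : ℕ)
    (h : ∀ R > (0:ℝ), ∃ 𝒱 : Set (Set X), ∃ D > (0:ℝ), IsCover 𝒱 ∧ (∀ U ∈ 𝒱, UBdd D U) ∧
      LebAtLeast R 𝒱 ∧ MultAtMost (n + 1) 𝒱) :
    ∀ R > (0:ℝ), ∃ V : Fin (n + 1) → Set (Set X), ∃ D > (0:ℝ),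
      IsCover (⋃ i, V i) ∧ (∀ U ∈ ⋃ i, V i, UBdd D U) ∧ ∀ i, RDisjoint R (V i) := by
  intro R hR
  obtain ⟨𝒱, D, hD, hcov, hbd, hleb, hmul⟩ := h ((n + 2) * R) (by positivity)
  refine ⟨fun i => {W | ∃ S ⊆ 𝒱, S.Finite ∧ S.ncard = i + 1 ∧ W = gapSet 𝒱 R S},
    D, hD, ?_, ?_, ?_⟩
  · intro x
    obtain ⟨U₀, hU₀, hb₀⟩ := hleb x
    obtain ⟨hfin, hcard⟩ := hmul x
    have hgap : ∃ k : ℕ, 1 ≤ k ∧ k ≤ n + 1 ∧ ∀ U ∈ 𝒱, Metric.ball x (k * R) ⊆ U →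
        Metric.ball x ((k + 1) * R) ⊆ U := by
      by_contra hno
      push Not at hno
      have hno' : ∀ i : Fin (n + 1), ∃ U ∈ 𝒱, Metric.ball x (((i : ℕ) + 1 : ℕ) * R) ⊆ U ∧
          ¬ Metric.ball x ((((i : ℕ) + 1 : ℕ) + 1) * R) ⊆ U := fun i =>
        hno (i + 1) (by omega) (by omega)
      choose g hg1 hg2 hg3 using hno'
      have hmono : ∀ i j, g i = g j → (j : ℕ) ≤ i := by
        intro i j hij
        by_contra hlt
        have hlt' : ((i : ℕ) : ℝ) + 1 ≤ (j : ℕ) := by exact_mod_cast not_le.1 hlt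
        apply hg3 i
        rw [hij]
        refine (Metric.ball_subset_ball ?_).trans (hg2 j)
        push_cast
        nlinarith
      have hinj : Function.Injective g := fun i j hij =>
        Fin.ext (le_antisymm (hmono j i hij.symm) (hmono i j hij))
      have hsub : insert U₀ (range g) ⊆ {U ∈ 𝒱 | x ∈ U} := by
        rintro U (rfl | ⟨i, rfl⟩)
        · exact ⟨hU₀, hb₀ (Metric.mem_ball_self (by positivity))⟩
        · exact ⟨hg1 i, hg2 i (Metric.mem_ball_self (by positivity))⟩
      have hnot : U₀ ∉ range g := by
        rintro ⟨i, hi⟩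
        apply hg3 i
        rw [hi]
        refine (Metric.ball_subset_ball ?_).trans hb₀
        have : ((i : ℕ) : ℝ) ≤ n := by exact_mod_cast Nat.lt_succ_iff.1 i.2
        push_cast
        nlinarith
      have h1 := Set.ncard_le_ncard hsub hfin
      rw [Set.ncard_insert_of_notMem hnot (Set.finite_range g),
        Set.ncard_range_of_injective hinj, Nat.card_eq_fintype_card, Fintype.card_fin] at h1
      omega
    obtain ⟨k, hk1, hk2, hk⟩ := hgap
    have hkpos : (0:ℝ) < k := by exact_mod_cast hk1
    have hk2' : (k : ℝ) ≤ n + 1 := by exact_mod_cast hk2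
    have hsub : {U ∈ 𝒱 | Metric.ball x (k * R) ⊆ U} ⊆ {U ∈ 𝒱 | x ∈ U} := fun U hU =>
      ⟨hU.1, hU.2 (Metric.mem_ball_self (by positivity))⟩
    have hSfin := hfin.subset hsub
    have hle := Set.ncard_le_ncard hsub hfin
    have hpos : 0 < {U ∈ 𝒱 | Metric.ball x (k * R) ⊆ U}.ncard := by
      rw [Set.ncard_pos hSfin]
      refine ⟨U₀, hU₀, (Metric.ball_subset_ball ?_).trans hb₀⟩
      nlinarith
    refine ⟨gapSet 𝒱 R {U ∈ 𝒱 | Metric.ball x (k * R) ⊆ U}, mem_iUnion.2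
      ⟨⟨{U ∈ 𝒱 | Metric.ball x (k * R) ⊆ U}.ncard - 1, by omega⟩, _, fun U hU => hU.1,
        hSfin, ?_, rfl⟩, k, hk1, fun U hU => hk U hU.1 hU.2, fun U hU hb => ⟨hU, hb⟩⟩
    simp only
    omega
  · intro W hW
    obtain ⟨i, S, hS, hfin, hcard, rfl⟩ := mem_iUnion.1 hW
    obtain ⟨U, hU⟩ := (Set.ncard_pos hfin).1 (by omega)
    have hsub : gapSet 𝒱 R S ⊆ U := by
      rintro x ⟨k, -, hk, -⟩
      exact hk U hU (Metric.mem_ball_self (by positivity))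
    exact fun x hx y hy => hbd U (hS hU) x (hsub hx) y (hsub hy)
  · rintro i _ ⟨S, hS, hSf, hSc, rfl⟩ _ ⟨T, hT, hTf, hTc, rfl⟩ hne x ⟨k, -, hk1, hk2⟩
      y ⟨l, -, hl1, hl2⟩
    by_contra hlt
    have hxy := not_le.1 hlt
    have hST : S ≠ T := fun e => hne (by rw [e])
    have h1 : ¬ S ⊆ T := fun hs => hST (Set.eq_of_subset_of_ncard_le hs (by omega) hTf)
    have h2 : ¬ T ⊆ S := fun hs => hST (Set.eq_of_subset_of_ncard_le hs (by omega) hSf).symm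
    obtain ⟨U, hUS, hUT⟩ := Set.not_subset.1 h1
    obtain ⟨U', hUT', hUS'⟩ := Set.not_subset.1 h2
    have a1 : k < l := gapSet_key hR (hS hUS) hxy (hk1 U hUS) (fun hb => hUT (hl2 U (hS hUS) hb))
    have a2 : l < k := gapSet_key hR (hT hUT') (by rwa [dist_comm]) (hl1 U' hUT')
      (fun hb => hUS' (hk2 U' (hT hUT') hb))
    omega

/-- Ostrand characterization of asymptotic dimension at most `n` for metric spaces:
covers with large Lebesgue number and multiplicity at most `n+1` exist for all `R`
iff uniformly bounded covers decomposing into `n+1` many `R`-disjoint families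
exist for all `R`. -/
theorem stmt0 {X : Type*} [MetricSpace X] (n : ℕ) :
    (∀ R > (0:ℝ), ∃ 𝒱 : Set (Set X), ∃ D > (0:ℝ), IsCover 𝒱 ∧ (∀ U ∈ 𝒱, UBdd D U) ∧
      LebAtLeast R 𝒱 ∧ MultAtMost (n + 1) 𝒱) ↔
    (∀ R > (0:ℝ), ∃ V : Fin (n + 1) → Set (Set X), ∃ D > (0:ℝ),
      IsCover (⋃ i, V i) ∧ (∀ U ∈ ⋃ i, V i, UBdd D U) ∧ ∀ i, RDisjoint R (V i)) := by
  exact ⟨ostrand_mp n, ostrand_mpr n⟩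
end

section
/- Let X be a metric space, n ≥ 0 an integer, r > 0 and D > 0. Suppose 𝒱₁, …, 𝒱_{n+1} are families of subsets of X such that 𝒱 = 𝒱₁ ∪ … ∪ 𝒱_{n+1} is a cover of X, diam V ≤ D for every V ∈ 𝒱, and each 𝒱ᵢ is 2r-disjoint. Then the family 𝒲 = { N_r(V) : V ∈ 𝒱 }, where N_r(V) = { x ∈ X : dist(x,V) < r } is the open r-neighborhood of V, is a cover of X with diam W ≤ D + 2r for every W ∈ 𝒲, multiplicity at most n+1, and Lebesgue number at least r. -/
open Metric Set

/-- Expanding each member of a uniformly bounded cover consisting of `n+1` many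
`2r`-disjoint families by its open `r`-neighborhood yields a uniformly bounded cover
with multiplicity at most `n+1` and Lebesgue number at least `r`. -/
theorem stmt1 {X : Type*} [MetricSpace X] (n : ℕ) (r D : ℝ) (hr : 0 < r) (hD : 0 < D)
    (V : Fin (n + 1) → Set (Set X))
    (hcover : IsCover (⋃ i, V i))
    (hbdd : ∀ U ∈ ⋃ i, V i, UBdd D U)
    (hdisj : ∀ i, RDisjoint (2 * r) (V i)) :
    IsCover ((fun U => {x : X | ∃ v ∈ U, dist x v < r}) '' (⋃ i, V i)) ∧
    (∀ W ∈ (fun U => {x : X | ∃ v ∈ U, dist x v < r}) '' (⋃ i, V i), UBdd (D + 2 * r) W) ∧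
    MultAtMost (n + 1) ((fun U => {x : X | ∃ v ∈ U, dist x v < r}) '' (⋃ i, V i)) ∧
    LebAtLeast r ((fun U => {x : X | ∃ v ∈ U, dist x v < r}) '' (⋃ i, V i)) := by
  refine ⟨?_, ?_, ?_, ?_⟩
  · intro x
    obtain ⟨U, hU, hx⟩ := hcover x
    exact ⟨_, ⟨U, hU, rfl⟩, x, hx, by simpa using hr⟩
  · rintro W ⟨U, hU, rfl⟩ x ⟨v, hv, hxv⟩ y ⟨w, hw, hyw⟩
    have h1 := hbdd U hU v hv w hw
    have h2 := dist_triangle4 x v w y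
    rw [dist_comm w y] at h2
    linarith
  · intro x
    have key : ∀ i, ∃ W : Set X, ∀ U ∈ V i, (∃ v ∈ U, dist x v < r) →
        {x : X | ∃ v ∈ U, dist x v < r} = W := by
      intro i
      by_cases h : ∃ A ∈ V i, ∃ v ∈ A, dist x v < r
      · obtain ⟨A, hA, a, ha, hxa⟩ := h
        refine ⟨{x : X | ∃ v ∈ A, dist x v < r}, ?_⟩
        rintro U hU ⟨u, hu, hxu⟩
        by_cases hAU : U = A
        · rw [hAU]
        · have h1 := hdisj i U hU A hA hAU u hu a ha
          have h2 := dist_triangle_left u a x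
          linarith
      · exact ⟨∅, fun U hU hx => absurd ⟨U, hU, hx⟩ h⟩
    choose g hg using key
    have hsub : {W ∈ (fun U => {x : X | ∃ v ∈ U, dist x v < r}) '' (⋃ i, V i) | x ∈ W}
        ⊆ Set.range g := by
      rintro W ⟨⟨U, hU, rfl⟩, hx⟩
      obtain ⟨i, hi⟩ := Set.mem_iUnion.1 hU
      exact ⟨i, (hg i U hi hx).symm⟩
    refine ⟨(Set.finite_range g).subset hsub, ?_⟩
    refine (Set.ncard_le_ncard hsub (Set.finite_range g)).trans ?_
    rw [← Set.image_univ]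
    refine (Set.ncard_image_le Set.finite_univ).trans ?_
    simp [Set.ncard_univ]
  · intro x
    obtain ⟨U, hU, hx⟩ := hcover x
    exact ⟨_, ⟨U, hU, rfl⟩, fun y hy => ⟨x, hx, hy⟩⟩
end

section
/- Let f : X → Y be a function between metric spaces and n ≥ 1 an integer. Then f is coarsely n-to-1 if and only if for all R, S > 0 there exists T > 0 such that for every y ∈ Y the preimage f⁻¹(B(y,S)) of the open ball B(y,S) can be covered by at most n sets, each of diameter at most T, which are pairwise at distance at least R from each other (i.e. dist(a,b) ≥ R whenever a and b lie in two distinct sets of the covering family). -/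
open Metric Set

lemma walk_dist_bound {X : Type*} [MetricSpace X] {n : ℕ} (B : Fin n → Set X) (D R : ℝ)
    (hB : ∀ i, UBdd D (B i)) (G : SimpleGraph (Fin n))
    (hG : ∀ i j, G.Adj i j → ∃ a ∈ B i, ∃ b ∈ B j, dist a b < R)
    {i j : Fin n} (p : G.Walk i j) :
    ∀ a ∈ B i, ∀ b ∈ B j, dist a b ≤ D + p.length * (D + R) := by
  induction p with
  | nil =>
    intro a ha b hb
    simpa using hB _ a ha b hb
  | cons h p ih =>
    intro a ha b hb
    obtain ⟨c, hc, d, hd, hcd⟩ := hG _ _ h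
    have h1 := hB _ a ha c hc
    have h2 := ih d hd b hb
    have h3 := dist_triangle a c b
    have h4 := dist_triangle c d b
    rw [SimpleGraph.Walk.length_cons]
    push_cast
    linarith

/-- A map of metric spaces is coarsely `n`-to-`1` iff for all `R, S > 0` there is `T > 0`
such that preimages of open `S`-balls can be covered by at most `n` sets of diameter at
most `T` which are pairwise `R`-disjoint. -/
theorem stmt2 {X Y : Type*} [MetricSpace X] [MetricSpace Y] (n : ℕ) (hn : 1 ≤ n)
    (f : X → Y) :
    CoarselyNTo1 n f ↔
    ∀ R > (0:ℝ), ∀ S > (0:ℝ), ∃ T > (0:ℝ), ∀ y : Y,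
      ∃ B : Fin n → Set X, f ⁻¹' (Metric.ball y S) ⊆ ⋃ i, B i ∧ (∀ i, UBdd T (B i)) ∧
        ∀ i j, i ≠ j → ∀ a ∈ B i, ∀ b ∈ B j, R ≤ dist a b := by
  classical
  constructor
  · intro h R hR S hS
    obtain ⟨D, hD, H⟩ := h (2 * S) (by linarith)
    refine ⟨D + n * (D + R), by positivity, fun y => ?_⟩
    obtain ⟨B, hcov, hB⟩ := H (Metric.ball y S) (by
      intro a ha b hb
      have := dist_triangle_right a b y
      rw [Metric.mem_ball] at ha hb
      linarith)
    let G : SimpleGraph (Fin n) :=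
      SimpleGraph.fromRel (fun i j => ∃ a ∈ B i, ∃ b ∈ B j, dist a b < R)
    have hG : ∀ i j, G.Adj i j → ∃ a ∈ B i, ∃ b ∈ B j, dist a b < R := by
      intro i j hij
      rw [SimpleGraph.fromRel_adj] at hij
      obtain ⟨-, h | ⟨a, ha, b, hb, hab⟩⟩ := hij
      · exact h
      · exact ⟨b, hb, a, ha, by rwa [dist_comm]⟩
    let rep : Fin n → Fin n := fun j => Quot.out (G.connectedComponentMk j)
    have hrep : ∀ i j, rep i = rep j → G.Reachable i j := by
      intro i j hij
      apply SimpleGraph.ConnectedComponent.exact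
      have := congrArg (Quot.mk G.Reachable) hij
      exact (Quot.out_eq (G.connectedComponentMk i)).symm.trans
        (this.trans (Quot.out_eq (G.connectedComponentMk j)))
    refine ⟨fun i => {x | ∃ j, rep j = i ∧ x ∈ B j}, ?_, ?_, ?_⟩
    · intro x hx
      obtain ⟨j, hj⟩ := mem_iUnion.1 (hcov hx)
      exact mem_iUnion.2 ⟨rep j, j, rfl, hj⟩
    · rintro i a ⟨j, hj, ha⟩ b ⟨k, hk, hb⟩
      obtain ⟨p, hp⟩ := (hrep j k (hj.trans hk.symm)).exists_isPath
      have h1 := walk_dist_bound B D R hB G hG p a ha b hb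
      have h2 : (p.length : ℝ) ≤ n := by
        have := hp.length_lt
        rw [Fintype.card_fin] at this
        exact_mod_cast this.le
      have h3 : (p.length : ℝ) * (D + R) ≤ n * (D + R) :=
        mul_le_mul_of_nonneg_right h2 (by positivity)
      linarith
    · rintro i j hij a ⟨k, hk, ha⟩ b ⟨l, hl, hb⟩
      by_contra hlt
      push Not at hlt
      have hkl : k ≠ l := by
        rintro rfl
        exact hij (hk.symm.trans hl)
      have hadj : G.Adj k l := by
        rw [SimpleGraph.fromRel_adj]
        exact ⟨hkl, Or.inl ⟨a, ha, b, hb, hlt⟩⟩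
      apply hij
      rw [← hk, ← hl]
      simp only [rep]
      rw [SimpleGraph.ConnectedComponent.sound hadj.reachable]
  · intro h R hR
    obtain ⟨T, hT, H⟩ := h 1 one_pos (R + 1) (by linarith)
    refine ⟨T, hT, fun A hA => ?_⟩
    rcases A.eq_empty_or_nonempty with rfl | ⟨y, hy⟩
    · exact ⟨fun _ => ∅, by simp, fun i x hx => hx.elim⟩
    · obtain ⟨B, hcov, hB, -⟩ := H y
      refine ⟨B, fun x hx => hcov ?_, hB⟩
      have := hA (f x) hx y hy
      change dist (f x) y < R + 1
      linarith
end

section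
/- Let X be a metric space with the midpoint property, let 𝒱 be a family of subsets of X, and let R > 0. For V ∈ 𝒱 let st(V) denote the star of V with respect to the cover of X by all open balls of radius R/2, i.e. st(V) is the union of all open balls B(x, R/2), x ∈ X, that intersect V. Then the family { st(V) : V ∈ 𝒱 } is pairwise disjoint (st(A) ∩ st(B) = ∅ for distinct A, B ∈ 𝒱) if and only if 𝒱 is 2R-disjoint, i.e. dist(a,b) ≥ 2R whenever a ∈ A, b ∈ B for distinct members A, B of 𝒱. -/
open Metric Set

/-- In a metric space with the midpoint property, the stars of a family `𝒱` with respect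
to the cover by open balls of radius `R/2` are pairwise disjoint iff `𝒱` is `2R`-disjoint. -/
theorem stmt3 {X : Type*} [MetricSpace X]
    (hmid : ∀ x y : X, ∃ z : X, dist x z = dist x y / 2 ∧ dist z y = dist x y / 2)
    (𝒱 : Set (Set X)) (R : ℝ) (hR : 0 < R) :
    (∀ A ∈ 𝒱, ∀ B ∈ 𝒱, A ≠ B →
      (⋃ x ∈ {x : X | (Metric.ball x (R / 2) ∩ A).Nonempty}, Metric.ball x (R / 2)) ∩
      (⋃ x ∈ {x : X | (Metric.ball x (R / 2) ∩ B).Nonempty}, Metric.ball x (R / 2)) = ∅) ↔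
    RDisjoint (2 * R) 𝒱 := by
  constructor
  · intro h A hA B hB hAB a ha b hb
    by_contra hlt
    push Not at hlt
    obtain ⟨m, h1, h2⟩ := hmid a b
    obtain ⟨p, h3, h4⟩ := hmid a m
    obtain ⟨q, h5, h6⟩ := hmid m b
    have hm := h A hA B hB hAB
    rw [Set.eq_empty_iff_forall_notMem] at hm
    apply hm m
    constructor
    · refine Set.mem_biUnion (x := p) ⟨a, ?_, ha⟩ ?_
      · rw [Metric.mem_ball]; linarith
      · rw [Metric.mem_ball, dist_comm]; linarith
    · refine Set.mem_biUnion (x := q) ⟨b, ?_, hb⟩ ?_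
      · rw [Metric.mem_ball, dist_comm]; linarith
      · rw [Metric.mem_ball]; linarith
  · intro h A hA B hB hAB
    rw [Set.eq_empty_iff_forall_notMem]
    rintro m ⟨h1, h2⟩
    rw [Set.mem_iUnion₂] at h1 h2
    obtain ⟨p, ⟨a, hap, ha⟩, hmp⟩ := h1
    obtain ⟨q, ⟨b, hbq, hb⟩, hmq⟩ := h2
    have hd := h A hA B hB hAB a ha b hb
    rw [Metric.mem_ball] at hap hmp hbq hmq
    have t1 := dist_triangle a m b
    have t2 := dist_triangle_right a m p
    have t3 := dist_triangle_right m b q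
    linarith
end

section
/- Let X be a metric space and for each i ≥ 1 let ℬᵢ be a family of subsets of X. The following are equivalent: (1) there exists a sequence of positive reals Rᵢ tending to infinity such that ℬᵢ is Rᵢ-disjoint for each i; (2) there exists a sequence of covers 𝒰ᵢ of X and a sequence of positive reals Lᵢ tending to infinity such that each 𝒰ᵢ has Lebesgue number at least Lᵢ and for each i the family of stars { st(B, 𝒰ᵢ) : B ∈ ℬᵢ } is pairwise disjoint. -/
open Metric Set

/-- A sequence of families is `Rᵢ`-disjoint for some sequence `Rᵢ → ∞` iff there are covers
`𝒰ᵢ` with Lebesgue numbers tending to infinity making the stars of each family pairwise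
disjoint. -/
theorem stmt4 {X : Type*} [MetricSpace X] (ℬ : ℕ → Set (Set X)) :
    (∃ R : ℕ → ℝ, (∀ i, 0 < R i) ∧ Filter.Tendsto R Filter.atTop Filter.atTop ∧
      ∀ i, RDisjoint (R i) (ℬ i)) ↔
    (∃ 𝒰 : ℕ → Set (Set X), ∃ L : ℕ → ℝ, (∀ i, 0 < L i) ∧
      Filter.Tendsto L Filter.atTop Filter.atTop ∧
      ∀ i, IsCover (𝒰 i) ∧ LebAtLeast (L i) (𝒰 i) ∧
        ∀ A ∈ ℬ i, ∀ B ∈ ℬ i, A ≠ B → StarOf A (𝒰 i) ∩ StarOf B (𝒰 i) = ∅) := by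
  constructor
  · rintro ⟨R, hR, hT, hD⟩
    refine ⟨fun i => Set.range fun x => Metric.ball x (R i / 4), fun i => R i / 4,
      fun i => by have := hR i; positivity, hT.atTop_div_const (by norm_num), fun i => ⟨?_, ?_, ?_⟩⟩
    · intro x
      exact ⟨_, ⟨x, rfl⟩, Metric.mem_ball_self (by have := hR i; positivity)⟩
    · intro x
      exact ⟨_, ⟨x, rfl⟩, subset_rfl⟩
    · intro A hA B hB hAB
      rw [Set.eq_empty_iff_forall_notMem]
      rintro x ⟨⟨U, ⟨⟨c, rfl⟩, a, hac, ha⟩, hxc⟩, ⟨V, ⟨⟨d, rfl⟩, b, hbd, hb⟩, hxd⟩⟩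
      have h := hD i A hA B hB hAB a ha b hb
      simp only [Metric.mem_ball] at hac hxc hbd hxd
      have h1 := dist_triangle_right x a c
      have h2 := dist_triangle_right x b d
      have h3 := dist_triangle_left a b x
      linarith [dist_triangle_right a x c, dist_triangle_right b x d]
  · rintro ⟨𝒰, L, hL, hT, h⟩
    refine ⟨L, hL, hT, fun i A hA B hB hAB a ha b hb => ?_⟩
    obtain ⟨-, hLeb, hS⟩ := h i
    by_contra! hlt
    obtain ⟨U, hU, hsub⟩ := hLeb a
    have haU : a ∈ U := hsub (Metric.mem_ball_self (hL i))
    have hbU : b ∈ U := hsub (by rw [Metric.mem_ball']; exact hlt)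
    have hmem : a ∈ StarOf A (𝒰 i) ∩ StarOf B (𝒰 i) :=
      ⟨⟨U, ⟨hU, a, haU, ha⟩, haU⟩, ⟨U, ⟨hU, b, hbU, hb⟩, haU⟩⟩
    rw [hS A hA B hB hAB] at hmem
    exact hmem
end

section
/- Let X and Y be metric spaces and let f : X → Y be a surjective map that is coarse and coarsely n-to-1 (n ≥ 1). Suppose there is an integer m ≥ 1 such that for every R > 0 there exist families 𝒱₁, …, 𝒱ₘ of subsets of X whose union 𝒱 = 𝒱₁ ∪ … ∪ 𝒱ₘ is a uniformly bounded cover of X with each 𝒱ᵢ R-disjoint. Then for every S > 0 there exists a uniformly bounded cover of Y with Lebesgue number at least S and multiplicity at most n·m; in particular Y has asymptotic dimension at most n·m − 1. -/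
open Metric Set

/-- Pushing forward finite asymptotic dimension along a surjective coarse, coarsely
`n`-to-`1` map: if `X` admits, for every `R`, uniformly bounded covers splitting into `m`
many `R`-disjoint families, then `Y` admits, for every `S`, a uniformly bounded cover with
Lebesgue number at least `S` and multiplicity at most `n * m`. -/
theorem stmt6 {X Y : Type*} [MetricSpace X] [MetricSpace Y] (n m : ℕ) (hn : 1 ≤ n)
    (hm : 1 ≤ m) (f : X → Y) (hsurj : Function.Surjective f) (hcoarse : Coarse f)
    (hnto1 : CoarselyNTo1 n f)
    (hX : ∀ R > (0:ℝ), ∃ V : Fin m → Set (Set X), ∃ D > (0:ℝ),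
      IsCover (⋃ i, V i) ∧ (∀ U ∈ ⋃ i, V i, UBdd D U) ∧ ∀ i, RDisjoint R (V i)) :
    ∀ S > (0:ℝ), ∃ 𝒲 : Set (Set Y), ∃ D > (0:ℝ), IsCover 𝒲 ∧ (∀ W ∈ 𝒲, UBdd D W) ∧
      LebAtLeast S 𝒲 ∧ MultAtMost (n * m) 𝒲 := by
  intro S hS
  obtain ⟨T, hT, hB⟩ := hnto1 (2 * S) (by positivity)
  obtain ⟨V, D, hD, hcov, hbd, hdis⟩ := hX (T + 1) (by positivity)
  obtain ⟨E, hE, hfE⟩ := hcoarse D hD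
  have hleb : LebAtLeast S {W : Set Y | ∃ U ∈ ⋃ i, V i, W = {y | ∃ x ∈ U, dist y (f x) < S}} := by
    intro y
    obtain ⟨x, rfl⟩ := hsurj y
    obtain ⟨U, hU, hxU⟩ := hcov x
    exact ⟨_, ⟨U, hU, rfl⟩, fun z hz => ⟨x, hxU, hz⟩⟩
  refine ⟨_, E + 2 * S, by positivity, ?_, ?_, hleb, ?_⟩
  · intro y
    obtain ⟨W, hW, hyW⟩ := hleb y
    exact ⟨W, hW, hyW (Metric.mem_ball_self hS)⟩
  · rintro W ⟨U, hU, rfl⟩ y ⟨a, ha, hya⟩ z ⟨b, hb, hzb⟩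
    have h1 := hfE a b (hbd U hU a ha b hb)
    have h2 := dist_triangle4 y (f a) (f b) z
    rw [dist_comm (f b) z] at h2
    linarith
  · intro y
    obtain ⟨B, hBc, hBb⟩ := hB (Metric.ball y S) (by
      intro a ha b hb
      rw [Metric.mem_ball] at ha hb
      have := dist_triangle_right a b y
      linarith)
    classical
    let g : Fin n × Fin m → Set Y := fun p =>
      if h : ∃ U ∈ V p.2, (U ∩ B p.1).Nonempty then
        {y | ∃ x ∈ h.choose, dist y (f x) < S} else ∅
    have hsub : {U ∈ {W : Set Y | ∃ U ∈ ⋃ i, V i, W = {y | ∃ x ∈ U, dist y (f x) < S}} | y ∈ U}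
        ⊆ Set.range g := by
      rintro W ⟨⟨U, hU, rfl⟩, x, hxU, hx⟩
      obtain ⟨i, hi⟩ := Set.mem_iUnion.1 hU
      have hxm : x ∈ f ⁻¹' Metric.ball y S := by
        rw [Set.mem_preimage, Metric.mem_ball, dist_comm]
        exact hx
      obtain ⟨j, hj⟩ := Set.mem_iUnion.1 (hBc hxm)
      refine ⟨(j, i), ?_⟩
      have h : ∃ U ∈ V i, (U ∩ B j).Nonempty := ⟨U, hi, x, hxU, hj⟩
      have hg : g (j, i) = {y | ∃ x ∈ h.choose, dist y (f x) < S} := dif_pos h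
      have heq : h.choose = U := by
        by_contra hne
        obtain ⟨hc, z, hzU, hzB⟩ := h.choose_spec
        have h1 := hdis i _ hc U hi hne z hzU x hxU
        have h2 := hBb j z hzB x hj
        linarith
      rw [hg, heq]
    have hfin : (Set.range g).Finite := Set.finite_range g
    refine ⟨hfin.subset hsub, (Set.ncard_le_ncard hsub hfin).trans ?_⟩
    rw [← Set.image_univ]
    refine (Set.ncard_image_le Set.finite_univ).trans ?_
    simp [Set.ncard_univ]
end

section
/- Let X and Y be metric spaces and let f : X → Y be a map that is coarse and coarsely n-to-1 (n ≥ 1). Suppose there is an integer m ≥ 1 such that for every R > 0 there exist families 𝒱₁, …, 𝒱ₘ of subsets of Y whose union 𝒱 = 𝒱₁ ∪ … ∪ 𝒱ₘ is a uniformly bounded cover of Y with each 𝒱ᵢ R-disjoint. Then for every R > 0 there exists a uniformly bounded cover of X with Lebesgue number at least R and multiplicity at most n·m; in particular X has asymptotic dimension at most n·m − 1. -/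
open Metric Set

/-- Pulling back finite asymptotic dimension along a coarse, coarsely `n`-to-`1` map:
if `Y` admits, for every `R`, uniformly bounded covers splitting into `m` many `R`-disjoint
families, then `X` admits, for every `R`, a uniformly bounded cover with Lebesgue number at
least `R` and multiplicity at most `n * m`. -/
theorem stmt7 {X Y : Type*} [MetricSpace X] [MetricSpace Y] (n m : ℕ) (hn : 1 ≤ n)
    (hm : 1 ≤ m) (f : X → Y) (hcoarse : Coarse f) (hnto1 : CoarselyNTo1 n f)
    (hY : ∀ R > (0:ℝ), ∃ V : Fin m → Set (Set Y), ∃ D > (0:ℝ),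
      IsCover (⋃ i, V i) ∧ (∀ U ∈ ⋃ i, V i, UBdd D U) ∧ ∀ i, RDisjoint R (V i)) :
    ∀ R > (0:ℝ), ∃ 𝒲 : Set (Set X), ∃ D > (0:ℝ), IsCover 𝒲 ∧ (∀ W ∈ 𝒲, UBdd D W) ∧
      LebAtLeast R 𝒲 ∧ MultAtMost (n * m) 𝒲 := by
  intro R hR
  obtain ⟨S, hS, hf⟩ := hcoarse R hR
  obtain ⟨V, D, hD, hcov, hbd, hdisj⟩ := hY (2 * S + 1) (by linarith)
  obtain ⟨T, hT, hB⟩ := hnto1 D hD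
  choose! B hBcov hBbd using hB
  let W : Set Y → Fin n → Set X := fun A j =>
    {x | ∃ z, z ∈ B A j ∧ f z ∈ A ∧ dist x z ≤ R}
  have key : ∀ x : X, ∃ A ∈ ⋃ i, V i, ∃ j, Metric.ball x R ⊆ W A j := by
    intro x
    obtain ⟨A, hA, hxA⟩ := hcov (f x)
    have hx : x ∈ ⋃ i, B A i := hBcov A (hbd A hA) hxA
    obtain ⟨j, hj⟩ := Set.mem_iUnion.1 hx
    refine ⟨A, hA, j, ?_⟩
    intro y hy
    exact ⟨x, hj, hxA, (Metric.mem_ball.1 hy).le⟩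
  refine ⟨{U | ∃ A ∈ ⋃ i, V i, ∃ j, U = W A j}, T + 2 * R, by linarith, ?_, ?_, ?_, ?_⟩
  · intro x
    obtain ⟨A, hA, j, hj⟩ := key x
    exact ⟨W A j, ⟨A, hA, j, rfl⟩, hj (Metric.mem_ball_self hR)⟩
  · rintro U ⟨A, hA, j, rfl⟩ x ⟨z, hz, -, hxz⟩ y ⟨w, hw, -, hyw⟩
    have h1 := hBbd A (hbd A hA) j z hz w hw
    have h2 := dist_triangle4 x z w y
    rw [dist_comm w y] at h2
    linarith
  · intro x
    obtain ⟨A, hA, j, hj⟩ := key x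
    exact ⟨W A j, ⟨A, hA, j, rfl⟩, hj⟩
  · intro x
    have hA : ∀ i, ∃ A, ∀ A' ∈ V i, (∃ j, x ∈ W A' j) → A' = A := by
      intro i
      by_cases h : ∃ A ∈ V i, ∃ j, x ∈ W A j
      · obtain ⟨A, hAV, j, z, -, hz, hxz⟩ := h
        refine ⟨A, ?_⟩
        rintro A' hA' ⟨j', w, -, hw, hxw⟩
        by_contra hne
        have h1 := hdisj i A' hA' A hAV hne _ hw _ hz
        have h2 := hf _ _ hxz
        have h3 := hf _ _ hxw
        have h4 := dist_triangle_left (f w) (f z) (f x)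
        linarith
      · exact ⟨∅, fun A' hA' hj => absurd ⟨A', hA', hj⟩ h⟩
    choose A hA using hA
    let g : Fin n × Fin m → Set X := fun p => W (A p.2) p.1
    have hsub : {U ∈ {U | ∃ A ∈ ⋃ i, V i, ∃ j, U = W A j} | x ∈ U} ⊆ g '' Set.univ := by
      rintro U ⟨⟨A', hA', j, rfl⟩, hx⟩
      obtain ⟨i, hi⟩ := Set.mem_iUnion.1 hA'
      refine ⟨(j, i), Set.mem_univ _, ?_⟩
      simp only [g]
      rw [hA i A' hi ⟨j, hx⟩]
    have hfin : (g '' Set.univ).Finite := Set.finite_univ.image g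
    refine ⟨hfin.subset hsub, (Set.ncard_le_ncard hsub hfin).trans ?_⟩
    refine (Set.ncard_image_le Set.finite_univ).trans ?_
    simp [Set.ncard_univ]
end

section
/- Let X and Y be metric spaces and let f : X → Y be a surjective map that is coarse and coarsely n-to-1 (n ≥ 1). Then X has finite asymptotic dimension if and only if Y has finite asymptotic dimension; that is, there exists k such that for every R > 0 there is a uniformly bounded cover of X with Lebesgue number at least R and multiplicity at most k, if and only if there exists k' such that for every R > 0 there is a uniformly bounded cover of Y with Lebesgue number at least R and multiplicity at most k'. -/
open Metric Set

theorem aux_count {α : Type*} {n k : ℕ} (T : Fin n → Set α)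
    (hT : ∀ i, (T i).Finite ∧ (T i).ncard ≤ k) (A : Set α) (hA : A ⊆ ⋃ i, T i) :
    A.Finite ∧ A.ncard ≤ n * k := by
  classical
  have hfin : (⋃ i, T i).Finite := Set.finite_iUnion fun i => (hT i).1
  refine ⟨hfin.subset hA, (Set.ncard_le_ncard hA hfin).trans ?_⟩
  have e : (⋃ i, T i) = ((Finset.univ.biUnion fun i => (hT i).1.toFinset : Finset α) : Set α) := by
    ext x; simp
  rw [e, Set.ncard_coe_finset]
  refine (Finset.card_biUnion_le_card_mul _ _ k ?_).trans (by simp)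
  intro i _
  rw [← Set.ncard_eq_toFinset_card _ (hT i).1]
  exact (hT i).2

/-- Finite asymptotic dimension is an invariant of surjective coarse, coarsely
`n`-to-`1` maps. -/
theorem stmt8 {X Y : Type*} [MetricSpace X] [MetricSpace Y] (n : ℕ) (hn : 1 ≤ n)
    (f : X → Y) (hsurj : Function.Surjective f) (hcoarse : Coarse f)
    (hnto1 : CoarselyNTo1 n f) :
    (∃ k : ℕ, ∀ R > (0:ℝ), ∃ 𝒱 : Set (Set X), ∃ D > (0:ℝ), IsCover 𝒱 ∧
      (∀ U ∈ 𝒱, UBdd D U) ∧ LebAtLeast R 𝒱 ∧ MultAtMost k 𝒱) ↔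
    (∃ k' : ℕ, ∀ R > (0:ℝ), ∃ 𝒲 : Set (Set Y), ∃ D > (0:ℝ), IsCover 𝒲 ∧
      (∀ W ∈ 𝒲, UBdd D W) ∧ LebAtLeast R 𝒲 ∧ MultAtMost k' 𝒲) := by
  constructor
  · rintro ⟨k, hk⟩
    refine ⟨n * k, fun R hR => ?_⟩
    obtain ⟨S, hS, hSB⟩ := hnto1 (2 * R) (by linarith)
    obtain ⟨V, D, hD, hcov, hbd, hleb, hmul⟩ := hk (S + 1) (by linarith)
    obtain ⟨E, hE, hfE⟩ := hcoarse D hD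
    let g : Set X → Set Y := fun U => {y | ∃ x, ball x (S + 1) ⊆ U ∧ dist y (f x) < R}
    have key : ∀ y : Y, ∃ U ∈ V, ball y R ⊆ g U := by
      intro y
      obtain ⟨x, rfl⟩ := hsurj y
      obtain ⟨U, hU, hb⟩ := hleb x
      exact ⟨U, hU, fun z hz => ⟨x, hb, hz⟩⟩
    refine ⟨g '' V, E + 2 * R, by linarith, ?_, ?_, ?_, ?_⟩
    · intro y
      obtain ⟨U, hU, hb⟩ := key y
      exact ⟨g U, ⟨U, hU, rfl⟩, hb (mem_ball_self hR)⟩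
    · rintro _ ⟨U, hU, rfl⟩ y ⟨x, hx, hyx⟩ y' ⟨x', hx', hyx'⟩
      have h1 := hfE x x' (hbd U hU x (hx (mem_ball_self (by linarith))) x'
        (hx' (mem_ball_self (by linarith))))
      have h2 := dist_triangle4 y (f x) (f x') y'
      rw [dist_comm (f x') y'] at h2
      linarith
    · intro y
      obtain ⟨U, hU, hb⟩ := key y
      exact ⟨g U, ⟨U, hU, rfl⟩, hb⟩
    · intro y
      obtain ⟨B, hB, hBS⟩ := hSB (ball y R) (by
        intro a ha b hb
        have := dist_triangle_right a b y
        rw [mem_ball] at ha hb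
        linarith)
      refine aux_count (fun i => g '' {U ∈ V | ∃ x ∈ B i, ball x (S + 1) ⊆ U}) ?_ _ ?_
      · intro i
        have h : {U ∈ V | ∃ x ∈ B i, ball x (S + 1) ⊆ U}.Finite ∧
            {U ∈ V | ∃ x ∈ B i, ball x (S + 1) ⊆ U}.ncard ≤ k := by
          rcases (B i).eq_empty_or_nonempty with h0 | ⟨b, hb⟩
          · simp [h0]
          · have hsub : {U ∈ V | ∃ x ∈ B i, ball x (S + 1) ⊆ U} ⊆ {U ∈ V | b ∈ U} := by
              rintro U ⟨hU, x, hx, hxU⟩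
              refine ⟨hU, hxU ?_⟩
              have := hBS i b hb x hx
              rw [mem_ball]
              linarith
            exact ⟨(hmul b).1.subset hsub,
              (Set.ncard_le_ncard hsub (hmul b).1).trans (hmul b).2⟩
        exact ⟨h.1.image g, (Set.ncard_image_le h.1).trans h.2⟩
      · rintro _ ⟨⟨U, hU, rfl⟩, x, hx, hyx⟩
        have hxB : x ∈ ⋃ i, B i := hB (by
          change dist (f x) y < R
          rwa [dist_comm])
        obtain ⟨i, hi⟩ := mem_iUnion.1 hxB
        exact mem_iUnion.2 ⟨i, U, ⟨hU, x, hi, hx⟩, rfl⟩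
  · rintro ⟨k, hk⟩
    refine ⟨n * k, fun R hR => ?_⟩
    obtain ⟨S, hS, hfS⟩ := hcoarse R hR
    obtain ⟨V, D, hD, hcov, hbd, hleb, hmul⟩ := hk (S + 1) (by linarith)
    obtain ⟨T, hT, hTB⟩ := hnto1 D hD
    have hB' : ∀ W : Set Y, ∃ B : Fin n → Set X, W ∈ V →
        f ⁻¹' W ⊆ ⋃ i, B i ∧ ∀ i, UBdd T (B i) := by
      intro W
      by_cases hW : W ∈ V
      · obtain ⟨B, hB⟩ := hTB W (hbd W hW)
        exact ⟨B, fun _ => hB⟩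
      · exact ⟨fun _ => ∅, fun h => absurd h hW⟩
    choose B hB using hB'
    let g : Fin n → Set Y → Set X := fun i W => {x | f x ∈ W ∧ ∃ b ∈ B W i, dist x b < R}
    have key : ∀ x : X, ∃ W ∈ V, ∃ i, ball x R ⊆ g i W := by
      intro x
      obtain ⟨W, hW, hb⟩ := hleb (f x)
      have hx : x ∈ ⋃ i, B W i := (hB W hW).1 (hb (mem_ball_self (by linarith)))
      obtain ⟨i, hi⟩ := mem_iUnion.1 hx
      refine ⟨W, hW, i, fun z hz => ⟨hb ?_, x, hi, hz⟩⟩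
      have := hfS z x (le_of_lt hz)
      rw [mem_ball]
      linarith
    refine ⟨{U | ∃ W ∈ V, ∃ i, U = g i W}, T + 2 * R, by linarith, ?_, ?_, ?_, ?_⟩
    · intro x
      obtain ⟨W, hW, i, hb⟩ := key x
      exact ⟨g i W, ⟨W, hW, i, rfl⟩, hb (mem_ball_self hR)⟩
    · rintro _ ⟨W, hW, i, rfl⟩ x ⟨-, b, hb, hxb⟩ x' ⟨-, b', hb', hxb'⟩
      have h1 := (hB W hW).2 i b hb b' hb'
      have h2 := dist_triangle4 x b b' x'
      rw [dist_comm b' x'] at h2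
      linarith
    · intro x
      obtain ⟨W, hW, i, hb⟩ := key x
      exact ⟨g i W, ⟨W, hW, i, rfl⟩, hb⟩
    · intro x
      refine aux_count (fun i => g i '' {W ∈ V | f x ∈ W}) ?_ _ ?_
      · intro i
        have h := hmul (f x)
        exact ⟨h.1.image _, (Set.ncard_image_le h.1).trans h.2⟩
      · rintro _ ⟨⟨W, hW, i, rfl⟩, hx⟩
        exact mem_iUnion.2 ⟨i, W, ⟨hW, hx.1⟩, rfl⟩
end

section
/- Let X and Y be metric spaces and let f : X → Y be a surjective map that is coarse and coarsely n-to-1 (n ≥ 1). Then X is large scale finitistic if and only if Y is large scale finitistic. -/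
open Metric Set

theorem aux_union {α : Type*} {n m : ℕ} {T : Set α} {S : Fin n → Set α}
    (hT : T ⊆ ⋃ i, S i) (hS : ∀ i, (S i).Finite ∧ (S i).ncard ≤ m) :
    T.Finite ∧ T.ncard ≤ n * m := by
  have hfin : (⋃ i, S i).Finite := Set.finite_iUnion fun i => (hS i).1
  refine ⟨hfin.subset hT, (Set.ncard_le_ncard hT hfin).trans ?_⟩
  refine (Set.ncard_iUnion_le_of_fintype S).trans ?_
  refine (Finset.sum_le_sum fun i _ => (hS i).2).trans ?_
  simp

/-- Being large scale finitistic is an invariant of surjective coarse, coarsely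
`n`-to-`1` maps. -/
theorem stmt9 {X Y : Type*} [MetricSpace X] [MetricSpace Y] (n : ℕ) (hn : 1 ≤ n)
    (f : X → Y) (hsurj : Function.Surjective f) (hcoarse : Coarse f)
    (hnto1 : CoarselyNTo1 n f) :
    (∀ R > (0:ℝ), ∃ m : ℕ, 1 ≤ m ∧ ∃ 𝒱 : Set (Set X), ∃ D > (0:ℝ), IsCover 𝒱 ∧
      (∀ U ∈ 𝒱, UBdd D U) ∧ LebAtLeast R 𝒱 ∧ MultAtMost m 𝒱) ↔
    (∀ R > (0:ℝ), ∃ m : ℕ, 1 ≤ m ∧ ∃ 𝒲 : Set (Set Y), ∃ D > (0:ℝ), IsCover 𝒲 ∧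
      (∀ W ∈ 𝒲, UBdd D W) ∧ LebAtLeast R 𝒲 ∧ MultAtMost m 𝒲) := by
  constructor
  · intro hX R hR
    obtain ⟨S, hS, hSB⟩ := hnto1 (2 * R) (by linarith)
    obtain ⟨m, hm, V, D, hD, hcov, hbd, hleb, hmult⟩ := hX (S + 1) (by linarith)
    obtain ⟨E, hE, hfE⟩ := hcoarse D hD
    let g : Set X → Set Y := fun U =>
      {z | ∃ x, Metric.ball x (S + 1) ⊆ U ∧ dist z (f x) < R}
    have hgl : ∀ y : Y, ∃ W ∈ g '' V, Metric.ball y R ⊆ W := by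
      intro y
      obtain ⟨x, rfl⟩ := hsurj y
      obtain ⟨U, hU, hxU⟩ := hleb x
      exact ⟨g U, ⟨U, hU, rfl⟩, fun z hz => ⟨x, hxU, hz⟩⟩
    refine ⟨n * m, Nat.mul_pos hn hm, g '' V, E + 2 * R, by linarith, ?_, ?_, hgl, ?_⟩
    · intro y
      obtain ⟨W, hW, h⟩ := hgl y
      exact ⟨W, hW, h (Metric.mem_ball_self hR)⟩
    · rintro _ ⟨U, hU, rfl⟩ z ⟨x, hx, hz⟩ w ⟨x', hx', hw⟩
      have h1 := hfE x x' (hbd U hU x (hx (Metric.mem_ball_self (by linarith)))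
        x' (hx' (Metric.mem_ball_self (by linarith))))
      have h2 := dist_triangle4 z (f x) (f x') w
      rw [dist_comm (f x') w] at h2
      linarith
    · intro z
      obtain ⟨B, hB, hBS⟩ := hSB (Metric.ball z R) (by
        intro a ha b hb
        have h2 := dist_triangle_right a b z
        rw [Metric.mem_ball] at ha hb
        linarith)
      have hb : ∀ i, ∃ b : X, (B i).Nonempty → b ∈ B i := by
        intro i
        by_cases h : (B i).Nonempty
        · exact ⟨h.some, fun _ => h.some_mem⟩
        · exact ⟨(hsurj z).choose, fun h' => absurd h' h⟩
      choose b hb using hb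
      refine aux_union (S := fun i => g '' {U ∈ V | b i ∈ U}) ?_ ?_
      · rintro _ ⟨⟨U, hU, rfl⟩, x, hx, hzx⟩
        obtain ⟨i, hi⟩ := Set.mem_iUnion.1 (hB (show f x ∈ Metric.ball z R by
          rw [Metric.mem_ball, dist_comm]; exact hzx))
        refine Set.mem_iUnion.2 ⟨i, U, ⟨hU, hx ?_⟩, rfl⟩
        have := hBS i (b i) (hb i ⟨x, hi⟩) x hi
        rw [Metric.mem_ball]
        linarith
      · intro i
        exact ⟨(hmult (b i)).1.image g,
          (Set.ncard_image_le (hmult (b i)).1).trans (hmult (b i)).2⟩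
  · intro hY R hR
    obtain ⟨S, hS, hfS⟩ := hcoarse R hR
    obtain ⟨m, hm, W, D, hD, hcov, hbd, hleb, hmult⟩ := hY (S + 1) (by linarith)
    obtain ⟨T, hT, hTB⟩ := hnto1 D hD
    have hB : ∀ A : Set Y, ∃ B : Fin n → Set X, UBdd D A →
        f ⁻¹' A ⊆ ⋃ i, B i ∧ ∀ i, UBdd T (B i) := by
      intro A
      by_cases h : UBdd D A
      · obtain ⟨B, hB⟩ := hTB A h
        exact ⟨B, fun _ => hB⟩
      · exact ⟨fun _ => ∅, fun h' => absurd h' h⟩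
    choose B hB using hB
    let g : Fin n → Set Y → Set X := fun i A =>
      {x | f x ∈ A ∧ ∃ b ∈ B A i, dist x b < R}
    have hgl : ∀ x : X, ∃ U ∈ {U | ∃ A ∈ W, ∃ i, g i A = U}, Metric.ball x R ⊆ U := by
      intro x
      obtain ⟨A, hA, hxA⟩ := hleb (f x)
      obtain ⟨i, hi⟩ := Set.mem_iUnion.1 ((hB A (hbd A hA)).1
        (show f x ∈ A from hxA (Metric.mem_ball_self (by linarith))))
      refine ⟨g i A, ⟨A, hA, i, rfl⟩, fun z hz => ⟨hxA ?_, x, hi, hz⟩⟩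
      have := hfS z x (le_of_lt hz)
      rw [Metric.mem_ball]
      linarith
    refine ⟨n * m, Nat.mul_pos hn hm, {U | ∃ A ∈ W, ∃ i, g i A = U}, T + 2 * R,
      by linarith, ?_, ?_, hgl, ?_⟩
    · intro y
      obtain ⟨U, hU, h⟩ := hgl y
      exact ⟨U, hU, h (Metric.mem_ball_self hR)⟩
    · rintro _ ⟨A, hA, i, rfl⟩ z ⟨_, x, hx, hz⟩ w ⟨_, x', hx', hw⟩
      have h1 := (hB A (hbd A hA)).2 i x hx x' hx'
      have h2 := dist_triangle4 z x x' w
      rw [dist_comm x' w] at h2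
      linarith
    · intro x
      refine aux_union (S := fun i => g i '' {A ∈ W | f x ∈ A}) ?_ ?_
      · rintro _ ⟨⟨A, hA, i, rfl⟩, hx⟩
        exact Set.mem_iUnion.2 ⟨i, A, ⟨hA, hx.1⟩, rfl⟩
      · intro i
        exact ⟨(hmult (f x)).1.image _,
          (Set.ncard_image_le (hmult (f x)).1).trans (hmult (f x)).2⟩
end

section
/- Let X and Y be metric spaces and let f : X → Y be a surjective map that is coarse and coarsely n-to-1 for some integer n ≥ 1. If X is large scale weakly paracompact then so is Y. -/
open Metric Set

/-- Large scale weak paracompactness is pushed forward by surjective coarse, coarsely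
`n`-to-`1` maps. -/
theorem stmt10 {X Y : Type*} [MetricSpace X] [MetricSpace Y] (n : ℕ) (hn : 1 ≤ n)
    (f : X → Y) (hsurj : Function.Surjective f) (hcoarse : Coarse f)
    (hnto1 : CoarselyNTo1 n f)
    (hX : ∀ R > (0:ℝ), ∃ 𝒱 : Set (Set X), ∃ D > (0:ℝ), IsCover 𝒱 ∧
      (∀ U ∈ 𝒱, UBdd D U) ∧
      ∀ A : Set X, UBdd R A → {V ∈ 𝒱 | (V ∩ A).Nonempty}.Finite) :
    ∀ R > (0:ℝ), ∃ 𝒲 : Set (Set Y), ∃ D > (0:ℝ), IsCover 𝒲 ∧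
      (∀ W ∈ 𝒲, UBdd D W) ∧
      ∀ A : Set Y, UBdd R A → {W ∈ 𝒲 | (W ∩ A).Nonempty}.Finite := by
  intro R hR
  obtain ⟨S, hS, hB⟩ := hnto1 R hR
  obtain ⟨𝒱, D, hD, hcov, hbd, hfin⟩ := hX S hS
  obtain ⟨E, hE, hf⟩ := hcoarse D hD
  refine ⟨(fun V => f '' V) '' 𝒱, E, hE, ?_, ?_, ?_⟩
  · intro y
    obtain ⟨x, rfl⟩ := hsurj y
    obtain ⟨U, hU, hx⟩ := hcov x
    exact ⟨f '' U, ⟨U, hU, rfl⟩, ⟨x, hx, rfl⟩⟩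
  · rintro _ ⟨U, hU, rfl⟩ _ ⟨x, hx, rfl⟩ _ ⟨x', hx', rfl⟩
    exact hf x x' (hbd U hU x hx x' hx')
  · intro A hA
    obtain ⟨B, hsub, hBd⟩ := hB A hA
    have hF : (⋃ i, {V ∈ 𝒱 | (V ∩ B i).Nonempty}).Finite :=
      Set.finite_iUnion fun i => hfin (B i) (hBd i)
    refine (hF.image (fun V => f '' V)).subset ?_
    rintro _ ⟨⟨V, hV, rfl⟩, _, ⟨x, hx, rfl⟩, hxA⟩
    obtain ⟨i, hi⟩ := Set.mem_iUnion.1 (hsub (show x ∈ f ⁻¹' A from hxA))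
    exact ⟨V, Set.mem_iUnion.2 ⟨i, hV, x, hx, hi⟩, rfl⟩
end

section
/- Let X and Y be metric spaces and let f : X → Y be a surjective map that is coarsely n-to-1 for some integer n ≥ 1. If X has bounded geometry then Y has bounded geometry; more precisely, if every subset of X of diameter at most S has at most m(S) points for every S > 0, then for every R > 0 every subset of Y of diameter at most R has at most n·m(S) points, where S is the constant witnessing the coarsely n-to-1 condition for R. -/
open Metric Set

/-- Bounded geometry is pushed forward by surjective coarsely `n`-to-`1` maps, with the
explicit bound: subsets of `Y` of diameter at most `R` have at most `n * m S` points,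
where `S` witnesses the coarsely `n`-to-`1` condition for `R` and `m S` bounds the number
of points of subsets of `X` of diameter at most `S`. -/
theorem stmt11 {X Y : Type*} [MetricSpace X] [MetricSpace Y] (n : ℕ) (hn : 1 ≤ n)
    (f : X → Y) (hsurj : Function.Surjective f) (hnto1 : CoarselyNTo1 n f) (m : ℝ → ℕ)
    (hX : ∀ S > (0:ℝ), ∀ A : Set X, UBdd S A → A.Finite ∧ A.ncard ≤ m S) :
    ∀ R > (0:ℝ), ∀ S > (0:ℝ),
      (∀ A : Set Y, UBdd R A →
        ∃ B : Fin n → Set X, f ⁻¹' A ⊆ ⋃ i, B i ∧ ∀ i, UBdd S (B i)) →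
      ∀ A : Set Y, UBdd R A → A.Finite ∧ A.ncard ≤ n * m S := by
  intro R _ S hS hcov A hA
  classical
  obtain ⟨B, hB, hBS⟩ := hcov A hA
  have hfin : ∀ i, (B i).Finite := fun i => (hX S hS (B i) (hBS i)).1
  have hcard : ∀ i, (hfin i).toFinset.card ≤ m S := fun i => by
    rw [← Set.ncard_eq_toFinset_card (B i) (hfin i)]
    exact (hX S hS (B i) (hBS i)).2
  let T : Finset X := Finset.univ.biUnion fun i => (hfin i).toFinset
  have hT : T.card ≤ n * m S := by
    have h := Finset.card_biUnion_le_card_mul (Finset.univ : Finset (Fin n))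
      (fun i => (hfin i).toFinset) (m S) (fun i _ => hcard i)
    simpa [T] using h
  have hsub : A ⊆ ((T.image f : Finset Y) : Set Y) := by
    intro y hy
    obtain ⟨x, rfl⟩ := hsurj y
    obtain ⟨i, hi⟩ := Set.mem_iUnion.1 (hB (show x ∈ f ⁻¹' A from hy))
    refine Finset.mem_coe.2 (Finset.mem_image_of_mem f ?_)
    exact Finset.mem_biUnion.2 ⟨i, Finset.mem_univ i, (hfin i).mem_toFinset.2 hi⟩
  refine ⟨(Finset.finite_toSet _).subset hsub, ?_⟩
  calc A.ncard ≤ ((T.image f : Finset Y) : Set Y).ncard :=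
        Set.ncard_le_ncard hsub (Finset.finite_toSet _)
    _ = (T.image f).card := Set.ncard_coe_finset _
    _ ≤ T.card := Finset.card_image_le
    _ ≤ n * m S := hT
end

section
/- Let X and Y be metric spaces and let f : X → Y be coarse and coarsely n-to-1 for some integer n ≥ 1. If Y has bounded geometry, then there exists a subset Z ⊆ X such that Z (with the induced metric) has bounded geometry and Z is a net in X, i.e. there exists C > 0 such that every point of X is within distance C of some point of Z; in particular the inclusion Z ↪ X is a coarse equivalence. -/
open Metric Set

/-- If `f : X → Y` is coarse and coarsely `n`-to-`1` and `Y` has bounded geometry, then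
`X` contains a bounded geometry subset `Z` that is a net in `X` (hence the inclusion
`Z ↪ X` is a coarse equivalence). -/
theorem stmt12 {X Y : Type*} [MetricSpace X] [MetricSpace Y] (n : ℕ) (hn : 1 ≤ n)
    (f : X → Y) (hcoarse : Coarse f) (hnto1 : CoarselyNTo1 n f)
    (hY : ∀ R > (0:ℝ), ∃ m : ℕ, ∀ A : Set Y, UBdd R A → A.Finite ∧ A.ncard ≤ m) :
    ∃ Z : Set X,
      (∀ R > (0:ℝ), ∃ m : ℕ, ∀ A : Set X, A ⊆ Z → UBdd R A → A.Finite ∧ A.ncard ≤ m) ∧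
      ∃ C > (0:ℝ), ∀ x : X, ∃ z ∈ Z, dist x z ≤ C := by
  classical
  rcases isEmpty_or_nonempty X with hX | hX
  · exact ⟨∅, fun R _ => ⟨0, fun A hA _ => by
      have : A = ∅ := Set.subset_empty_iff.mp hA
      subst this; simp⟩, 1, one_pos, fun x => (hX.false x).elim⟩
  obtain ⟨S, hS, hcov⟩ := hnto1 1 one_pos
  have hsing : ∀ y : Y, UBdd 1 ({y} : Set Y) := by
    intro y a ha b hb
    rw [Set.mem_singleton_iff] at ha hb
    subst ha; subst hb; simp
  choose B hB hBS using fun y => hcov {y} (hsing y)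
  have hg : ∀ (y : Y) (i : Fin n), ∃ p : X, (B y i ∩ f ⁻¹' {y}).Nonempty →
      p ∈ B y i ∩ f ⁻¹' {y} := by
    intro y i
    by_cases h : (B y i ∩ f ⁻¹' {y}).Nonempty
    · exact ⟨h.some, fun _ => h.some_mem⟩
    · exact ⟨Classical.arbitrary X, fun h' => absurd h' h⟩
  choose g hg using hg
  refine ⟨{z | ∃ i, z = g (f z) i}, ?_, S, hS, ?_⟩
  · intro R hR
    obtain ⟨T, hT, hf⟩ := hcoarse R hR
    obtain ⟨m, hm⟩ := hY T hT
    refine ⟨m * n, fun A hA hAR => ?_⟩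
    have hb : UBdd T (f '' A) := by
      rintro _ ⟨a, ha, rfl⟩ _ ⟨b, hb, rfl⟩
      exact hf a b (hAR a ha b hb)
    obtain ⟨hfin, hcard⟩ := hm _ hb
    have hsub : A ⊆ (fun p : Y × Fin n => g p.1 p.2) '' ((f '' A) ×ˢ (Set.univ : Set (Fin n))) := by
      intro a ha
      obtain ⟨i, hi⟩ := hA ha
      exact ⟨(f a, i), ⟨⟨a, ha, rfl⟩, Set.mem_univ _⟩, hi.symm⟩
    have hfp : ((f '' A) ×ˢ (Set.univ : Set (Fin n))).Finite := hfin.prod Set.finite_univ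
    refine ⟨(hfp.image _).subset hsub, ?_⟩
    calc A.ncard ≤ _ := Set.ncard_le_ncard hsub (hfp.image _)
      _ ≤ _ := Set.ncard_image_le hfp
      _ = (f '' A).ncard * n := by rw [Set.ncard_prod]; simp
      _ ≤ m * n := Nat.mul_le_mul_right _ hcard
  · intro x
    obtain ⟨i, hi⟩ := Set.mem_iUnion.mp (hB (f x) (show x ∈ f ⁻¹' {f x} from rfl))
    have h := hg (f x) i ⟨x, hi, rfl⟩
    have h2 : f (g (f x) i) = f x := h.2
    exact ⟨g (f x) i, ⟨i, by rw [h2]⟩, hBS (f x) i x hi _ h.1⟩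
end
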